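/- Let ω = e^{2πi/3} ∈ ℂ. Define the 28 vectors in ℂ^4: 1=(1,ω,-1,0), 2=(-1,-1,ω,0), 3=(ω,1,-1,0), 4=(0,0,0,1), 5=(-1,ω,0,-1), 6=(ω,-1,0,1), 7=(1,-1,0,ω), 8=(0,0,1,0), 9=(ω,0,1,-1), A=(0,1,1,1), B=(ω²,0,ω,-1), C=(ω,0,ω²,-1), D=(1,0,1,-1), E=(0,1,0,0), F=(1,0,ω,-1), G=(0,1,ω,1), H=(1,-1,0,1), I=(0,ω,1,1), J=(0,1,1,ω), K=(1,0,0,0), L=(-1,0,-1,ω), M=(1,1,-1,0), N=(ω,-1,0,ω²), O=(ω²,-1,0,ω), P=(ω,ω²,-1,0), Q=(ω²,ω,-1,0), R=(0,1,ω,ω²), S=(0,1,ω²,ω). For each of the 14 quadruples 1234, 5678, 639A, BCDE, 2FGH, IGJK, L7JM, NOH8, 1I5D, DHMA, PQ4M, RSKA, L9FE, 4KE8, the four corresponding vectors are nonzero and pairwise orthogonal with respect to the standard Hermitian inner product on ℂ^4. -/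

import Mathlib

noncomputable def ω : ℂ := Complex.exp (2 * Real.pi * Complex.I / 3)

noncomputable def hdot (u v : Fin 4 → ℂ) : ℂ := ∑ i, (starRingEnd ℂ) (u i) * v i

noncomputable def v1 : Fin 4 → ℂ := ![1, ω, (-1), 0]
noncomputable def v2 : Fin 4 → ℂ := ![(-1), (-1), ω, 0]
noncomputable def v3 : Fin 4 → ℂ := ![ω, 1, (-1), 0]
noncomputable def v4 : Fin 4 → ℂ := ![0, 0, 0, 1]
noncomputable def v5 : Fin 4 → ℂ := ![(-1), ω, 0, (-1)]
noncomputable def v6 : Fin 4 → ℂ := ![ω, (-1), 0, 1]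
noncomputable def v7 : Fin 4 → ℂ := ![1, (-1), 0, ω]
noncomputable def v8 : Fin 4 → ℂ := ![0, 0, 1, 0]
noncomputable def v9 : Fin 4 → ℂ := ![ω, 0, 1, (-1)]
noncomputable def vA : Fin 4 → ℂ := ![0, 1, 1, 1]
noncomputable def vB : Fin 4 → ℂ := ![ω^2, 0, ω, (-1)]
noncomputable def vC : Fin 4 → ℂ := ![ω, 0, ω^2, (-1)]
noncomputable def vD : Fin 4 → ℂ := ![1, 0, 1, (-1)]
noncomputable def vE : Fin 4 → ℂ := ![0, 1, 0, 0]
noncomputable def vF : Fin 4 → ℂ := ![1, 0, ω, (-1)]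
noncomputable def vG : Fin 4 → ℂ := ![0, 1, ω, 1]
noncomputable def vH : Fin 4 → ℂ := ![1, (-1), 0, 1]
noncomputable def vI : Fin 4 → ℂ := ![0, ω, 1, 1]
noncomputable def vJ : Fin 4 → ℂ := ![0, 1, 1, ω]
noncomputable def vK : Fin 4 → ℂ := ![1, 0, 0, 0]
noncomputable def vL : Fin 4 → ℂ := ![(-1), 0, (-1), ω]
noncomputable def vM : Fin 4 → ℂ := ![1, 1, (-1), 0]
noncomputable def vN : Fin 4 → ℂ := ![ω, (-1), 0, ω^2]
noncomputable def vO : Fin 4 → ℂ := ![ω^2, (-1), 0, ω]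
noncomputable def vP : Fin 4 → ℂ := ![ω, ω^2, (-1), 0]
noncomputable def vQ : Fin 4 → ℂ := ![ω^2, ω, (-1), 0]
noncomputable def vR : Fin 4 → ℂ := ![0, 1, ω, ω^2]
noncomputable def vS : Fin 4 → ℂ := ![0, 1, ω^2, ω]

noncomputable def tuples : List (List (Fin 4 → ℂ)) :=
  [[v1, v2, v3, v4],
   [v5, v6, v7, v8],
   [v6, v3, v9, vA],
   [vB, vC, vD, vE],
   [v2, vF, vG, vH],
   [vI, vG, vJ, vK],
   [vL, v7, vJ, vM],
   [vN, vO, vH, v8],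
   [v1, vI, v5, vD],
   [vD, vH, vM, vA],
   [vP, vQ, v4, vM],
   [vR, vS, vK, vA],
   [vL, v9, vF, vE],
   [v4, vK, vE, v8]]

/-!
By `conj ω = ω ^ 2`, every inner product in question is a polynomial in `ω` with integer
coefficients. Its nonzero terms are roots of unity `± ω ^ k`: there are none, or two opposite ones,
or three forming a multiple of `1 + ω + ω ^ 2 = 0`.
-/

theorem conj_eq_pow_of_pow_succ_eq_one {z : ℂ} {n : ℕ} (hz : z ^ (n + 1) = 1) :
    (starRingEnd ℂ) z = z ^ n := by
  rw [← Complex.inv_eq_conj (Complex.norm_eq_one_of_pow_eq_one hz n.succ_ne_zero)]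
  exact inv_eq_of_mul_eq_one_right (by rw [← pow_succ', hz])

theorem isPrimitiveRoot_ω : IsPrimitiveRoot ω 3 :=
  Complex.isPrimitiveRoot_exp 3 three_ne_zero

theorem conj_ω : (starRingEnd ℂ) ω = ω ^ 2 :=
  conj_eq_pow_of_pow_succ_eq_one isPrimitiveRoot_ω.pow_eq_one

theorem one_add_ω_add_ω_sq : 1 + ω + ω ^ 2 = 0 := by
  simpa [Finset.sum_range_succ] using isPrimitiveRoot_ω.geom_sum_eq_zero (by norm_num)

theorem hdot_vec4 (a b c d a' b' c' d' : ℂ) :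
    hdot ![a, b, c, d] ![a', b', c', d'] =
      (starRingEnd ℂ) a * a' + (starRingEnd ℂ) b * b' + (starRingEnd ℂ) c * c' +
        (starRingEnd ℂ) d * d' :=
  Fin.sum_univ_four _

theorem ne_zero_of_mem_of_mem_tuples {t : List (Fin 4 → ℂ)} (ht : t ∈ tuples) {v : Fin 4 → ℂ}
    (hv : v ∈ t) : v ≠ 0 := by
  -- Each of the 28 vectors has a coordinate equal to `1` or `-1`.
  revert v t
  simp [tuples, v1, v2, v3, v4, v5, v6, v7, v8, v9, vA, vB, vC, vD, vE, vF, vG, vH, vI, vJ, vK,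
    vL, vM, vN, vO, vP, vQ, vR, vS]

theorem pairwise_hdot_eq_zero_of_mem_tuples {t : List (Fin 4 → ℂ)} (ht : t ∈ tuples) :
    t.Pairwise (fun u v => hdot u v = 0) := by
  have hω := one_add_ω_add_ω_sq
  revert t
  simp only [tuples, List.forall_mem_cons, List.pairwise_cons, List.Pairwise.nil,
    v1, v2, v3, v4, v5, v6, v7, v8, v9, vA, vB, vC, vD, vE, vF, vG, vH, vI, vJ, vK, vL, vM, vN,
    vO, vP, vQ, vR, vS, hdot_vec4, map_zero, map_one, map_neg, map_pow, conj_ω]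
  and_intros <;> grind

theorem zp2814_ortho :
    ∀ t ∈ tuples, (∀ v ∈ t, v ≠ (0 : Fin 4 → ℂ)) ∧
      List.Pairwise (fun u v => hdot u v = 0) t := by
  intro t ht
  exact ⟨fun _ => ne_zero_of_mem_of_mem_tuples ht, pairwise_hdot_eq_zero_of_mem_tuples ht⟩
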